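/- arXiv:1907.04663 — 2 statements merged into one kernel-verified Lean document; each statement's English description precedes it below -/
import Mathlib

section
/- Assume dom f ≠ ∅ and P = ℝⁿ × ℝˢ, and assume the benchmark distribution ν has finite first moment (ν ∈ 𝓜¹₁). Then the multifunction C₂ is closed with respect to the topology of weak convergence: for any sequences {μ_l} ⊆ 𝓜¹_s and {x_l} ⊆ ℝⁿ with μ_l → μ ∈ 𝓜¹_s weakly, x_l → x, and x_l ∈ C₂(μ_l) for all l ∈ ℕ, it holds that x ∈ C₂(μ). -/
open MeasureTheory Matrix Set Topology Filter
open scoped ENNReal NNReal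

noncomputable section

/-- Feasible set of the lower level problem: `{ y | A y ≤ T x + z }`. -/
def LowerFeas {n m s : ℕ} (A : Matrix (Fin s) (Fin m) ℝ) (T : Matrix (Fin s) (Fin n) ℝ)
    (x : Fin n → ℝ) (z : Fin s → ℝ) : Set (Fin m → ℝ) :=
  {y | A.mulVec y ≤ T.mulVec x + z}

/-- Lower level optimal solution set `Ψ(x,z) = Argmin { dᵀy | A y ≤ T x + z }`. -/
def Psi {n m s : ℕ} (d : Fin m → ℝ) (A : Matrix (Fin s) (Fin m) ℝ)
    (T : Matrix (Fin s) (Fin n) ℝ) (x : Fin n → ℝ) (z : Fin s → ℝ) : Set (Fin m → ℝ) :=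
  {y | y ∈ LowerFeas A T x z ∧ ∀ y' ∈ LowerFeas A T x z, d ⬝ᵥ y ≤ d ⬝ᵥ y'}

/-- `f(x,z) = cᵀx + inf { qᵀ y | y ∈ Ψ(x,z) }` with values in `ℝ ∪ {±∞}`
(the infimum over the empty set being `+∞`). -/
def fE {n m s : ℕ} (c : Fin n → ℝ) (q d : Fin m → ℝ) (A : Matrix (Fin s) (Fin m) ℝ)
    (T : Matrix (Fin s) (Fin n) ℝ) (x : Fin n → ℝ) (z : Fin s → ℝ) : EReal :=
  ((c ⬝ᵥ x : ℝ) : EReal) + sInf ((fun y => ((q ⬝ᵥ y : ℝ) : EReal)) '' Psi d A T x z)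

/-- `P = { (x,z) | ∃ y, A y ≤ T x + z }`. -/
def Pfeas {n m s : ℕ} (A : Matrix (Fin s) (Fin m) ℝ) (T : Matrix (Fin s) (Fin n) ℝ) :
    Set ((Fin n → ℝ) × (Fin s → ℝ)) :=
  {p | (LowerFeas A T p.1 p.2).Nonempty}

/-- `dom f = { (x,z) | f(x,z) ∈ ℝ }`. -/
def domf {n m s : ℕ} (c : Fin n → ℝ) (q d : Fin m → ℝ) (A : Matrix (Fin s) (Fin m) ℝ)
    (T : Matrix (Fin s) (Fin n) ℝ) : Set ((Fin n → ℝ) × (Fin s → ℝ)) :=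
  {p | fE c q d A T p.1 p.2 ≠ ⊤ ∧ fE c q d A T p.1 p.2 ≠ ⊥}

/-- Topological support of a Borel measure. -/
def msupport {s : ℕ} (μ : Measure (Fin s → ℝ)) : Set (Fin s → ℝ) :=
  {z | ∀ U : Set (Fin s → ℝ), IsOpen U → z ∈ U → μ U ≠ 0}

/-- `P_Z = { x | (x,z) ∈ P for all z ∈ supp μ_Z }`. -/
def PZSet {n m s : ℕ} (A : Matrix (Fin s) (Fin m) ℝ) (T : Matrix (Fin s) (Fin n) ℝ)
    (μZ : Measure (Fin s → ℝ)) : Set (Fin n → ℝ) :=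
  {x | ∀ z ∈ msupport μZ, (x, z) ∈ Pfeas A T}


/-- A polyhedron: solution set of finitely many linear inequalities. -/
def IsPolyhedron {n : ℕ} (X : Set (Fin n → ℝ)) : Prop :=
  ∃ (k : ℕ) (B : Matrix (Fin k) (Fin n) ℝ) (b : Fin k → ℝ), X = {x | B.mulVec x ≤ b}

/-- An atomless probability space: every set of positive measure has a measurable
subset of strictly smaller positive measure. -/
def AtomlessSpace {Ω : Type*} [MeasurableSpace Ω] (μ : Measure Ω) : Prop :=
  ∀ S : Set Ω, MeasurableSet S → 0 < μ S →
    ∃ B ⊆ S, MeasurableSet B ∧ 0 < μ B ∧ μ B < μ S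

/-- A set of Borel probability measures is locally uniformly `‖·‖^p`-integrating if around
every member there is a weakly open neighbourhood on which the `p`-th moment tails vanish
uniformly (the limit as `a → ∞` of the antitone tail suprema being their infimum). -/
def LocUnifIntegrating {s : ℕ} (pr : ℝ) (M : Set (ProbabilityMeasure (Fin s → ℝ))) : Prop :=
  ∀ μ ∈ M, ∀ ε : ℝ, 0 < ε →
    ∃ N : Set (ProbabilityMeasure (Fin s → ℝ)), IsOpen N ∧ μ ∈ N ∧
      ⨅ a : ℝ, ⨆ ν ∈ M ∩ N,
        ∫⁻ z in {z : Fin s → ℝ | a ≤ ‖z‖}, ENNReal.ofReal (‖z‖ ^ pr)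
          ∂(ν : Measure (Fin s → ℝ)) ≤ ENNReal.ofReal ε

/-- Feasible set under first-order stochastic dominance constraints. -/
def C1 {n m s : ℕ} (c : Fin n → ℝ) (q d : Fin m → ℝ) (A : Matrix (Fin s) (Fin m) ℝ)
    (T : Matrix (Fin s) (Fin n) ℝ) (X : Set (Fin n → ℝ)) (ν : Measure ℝ)
    (μ : ProbabilityMeasure (Fin s → ℝ)) : Set (Fin n → ℝ) :=
  {x ∈ X | ∀ β : ℝ,
    ν (Set.Iic β) ≤ (μ : Measure (Fin s → ℝ)) {z | fE c q d A T x z ≤ (β : EReal)}}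

/-- Feasible set under second-order stochastic dominance constraints. -/
def C2 {n m s : ℕ} (c : Fin n → ℝ) (q d : Fin m → ℝ) (A : Matrix (Fin s) (Fin m) ℝ)
    (T : Matrix (Fin s) (Fin n) ℝ) (X : Set (Fin n → ℝ)) (ν : Measure ℝ)
    (μ : ProbabilityMeasure (Fin s → ℝ)) : Set (Fin n → ℝ) :=
  {x ∈ X | ∀ η : ℝ,
    ∫ z, max ((fE c q d A T x z).toReal - η) 0 ∂(μ : Measure (Fin s → ℝ))
      ≤ ∫ b, max (b - η) 0 ∂ν}

/-!
The epigraph of the optimal value of a linear program, as a function of its right-hand side, is the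
sum of an orthant and a linear subspace. Fourier–Motzkin elimination, one spanning vector of the
subspace at a time, shows that this sum is cut out by finitely many inequalities, so the value is a
maximum of finitely many linear functions and hence Lipschitz. With `φ` the optimal value of the
lower level problem, the optimistic value is the value `min {q y | A y ≤ t, d y ≤ φ t}` of a second
linear program whose right-hand side `(t, φ t)` is Lipschitz in `t`. Hence `f` is real-valued and
jointly Lipschitz, the excess functions `max (f (x_l, ·) - η) 0` converge uniformly as `x_l → x`,
and the dominance inequalities pass to the limit by Fatou's lemma for weakly converging measures.
-/

open PointedCone (dual positive)
open Module (Dual)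

section FourierMotzkin

section Elimination

variable {𝕜 V : Type*} [Field 𝕜] [LinearOrder 𝕜] [AddCommGroup V] [Module 𝕜 V]

/-- The inequalities `g x ≥ 0` obtained from those indexed by `S` by Fourier–Motzkin elimination
of the direction `v`: those that do not see `v`, and the combinations in which `v` cancels. -/
def fourierMotzkin (S : Set (Dual 𝕜 V)) (v : V) : Set (Dual 𝕜 V) :=
  {g ∈ S | g v = 0} ∪
    image2 (fun g h ↦ g v • h - h v • g) {g ∈ S | 0 < g v} {h ∈ S | h v < 0}

theorem finite_fourierMotzkin {S : Set (Dual 𝕜 V)} (hS : S.Finite) (v : V) :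
    (fourierMotzkin S v).Finite :=
  (hS.sep _).union ((hS.sep _).image2 _ (hS.sep _))

end Elimination

variable {𝕜 V : Type*} [Field 𝕜] [LinearOrder 𝕜] [IsStrictOrderedRing 𝕜]
  [AddCommGroup V] [Module 𝕜 V]

theorem mem_sup_ofSubmodule {C : PointedCone 𝕜 V} {W : Submodule 𝕜 V} {x : V} :
    x ∈ C ⊔ (W : PointedCone 𝕜 V) ↔ ∃ w ∈ W, x - w ∈ C := by
  rw [Submodule.mem_sup]
  constructor
  · rintro ⟨y, hy, w, hw, rfl⟩
    exact ⟨w, hw, by rwa [add_sub_cancel_right]⟩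
  · rintro ⟨w, hw, hx⟩
    exact ⟨x - w, hx, w, hw, sub_add_cancel x w⟩

theorem exists_mem_upperBounds_inter_lowerBounds {α : Type*} [LinearOrder α] [Nonempty α]
    {s t : Set α} (hs : s.Finite) (ht : t.Finite) (hst : ∀ a ∈ s, ∀ b ∈ t, a ≤ b) :
    (upperBounds s ∩ lowerBounds t).Nonempty := by
  obtain rfl | hne := s.eq_empty_or_nonempty
  · obtain ⟨c, hc⟩ := ht.bddBelow
    exact ⟨c, by simp, hc⟩
  · obtain ⟨c, hcs, hc⟩ := s.exists_max_image id hs hne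
    exact ⟨c, hc, hst c hcs⟩

theorem exists_sub_smul_mem_dual_iff {S : Set (Dual 𝕜 V)} (hS : S.Finite) {v x : V} :
    (∃ t : 𝕜, x - t • v ∈ dual .id S) ↔ x ∈ dual .id (fourierMotzkin S v) := by
  have mem_iff (t : 𝕜) : x - t • v ∈ dual .id S ↔ ∀ g ∈ S, t * g v ≤ g x := by
    simp [PointedCone.mem_dual]
  simp only [mem_iff]
  constructor
  · rintro ⟨t, ht⟩ _ (⟨hg, hgv⟩ | ⟨g, ⟨hg, hgv⟩, h, ⟨hh, hhv⟩, rfl⟩)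
    · simpa [hgv] using ht _ hg
    · have hgx := mul_le_mul_of_nonneg_left (ht g hg) (neg_nonneg.2 hhv.le)
      have hhx := mul_le_mul_of_nonneg_left (ht h hh) hgv.le
      simp only [LinearMap.id_apply, LinearMap.sub_apply, LinearMap.smul_apply, smul_eq_mul]
      linarith
  · intro hx
    obtain ⟨t, hlower, hupper⟩ := exists_mem_upperBounds_inter_lowerBounds
      (s := (fun h ↦ h x / h v) '' {h ∈ S | h v < 0})
      (t := (fun g ↦ g x / g v) '' {g ∈ S | 0 < g v})
      ((hS.sep _).image _) ((hS.sep _).image _) <| by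
        rintro _ ⟨h, ⟨hh, hhv⟩, rfl⟩ _ ⟨g, ⟨hg, hgv⟩, rfl⟩
        have hgh : 0 ≤ g v * h x - h v * g x := hx (.inr ⟨g, ⟨hg, hgv⟩, h, ⟨hh, hhv⟩, rfl⟩)
        rw [div_le_iff_of_neg hhv, div_mul_eq_mul_div, div_le_iff₀ hgv]
        linarith
    refine ⟨t, fun g hg ↦ ?_⟩
    rcases lt_trichotomy (g v) 0 with hgv | hgv | hgv
    · exact (div_le_iff_of_neg hgv).1 (hlower ⟨g, ⟨hg, hgv⟩, rfl⟩)
    · simpa [hgv] using hx (.inl ⟨hg, hgv⟩)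
    · exact (le_div_iff₀ hgv).1 (hupper ⟨g, ⟨hg, hgv⟩, rfl⟩)

theorem dualFG_sup_span_singleton {C : PointedCone 𝕜 V} (hC : C.DualFG .id) (v : V) :
    (C ⊔ ((𝕜 ∙ v : Submodule 𝕜 V) : PointedCone 𝕜 V)).DualFG .id := by
  obtain ⟨S, rfl⟩ := hC
  have hsup : dual .id (S : Set (Dual 𝕜 V)) ⊔ ((𝕜 ∙ v : Submodule 𝕜 V) : PointedCone 𝕜 V) =
      dual .id (fourierMotzkin (S : Set (Dual 𝕜 V)) v) := by
    ext x
    simp [mem_sup_ofSubmodule, Submodule.mem_span_singleton,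
      ← exists_sub_smul_mem_dual_iff S.finite_toSet]
  rw [hsup]
  exact .dual_of_finite _ (finite_fourierMotzkin S.finite_toSet v)

theorem dualFG_sup_ofSubmodule {C : PointedCone 𝕜 V} (hC : C.DualFG .id) {W : Submodule 𝕜 V}
    (hW : W.FG) : (C ⊔ (W : PointedCone 𝕜 V)).DualFG .id := by
  induction W, hW using Submodule.fg_induction generalizing C with
  | singleton v => exact dualFG_sup_span_singleton hC v
  | sup W₁ W₂ _ _ ih₁ ih₂ =>
    rw [PointedCone.ofSubmodule_sup, ← sup_assoc]
    exact ih₂ (ih₁ hC)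

end FourierMotzkin

section PositiveCone

variable {𝕜 : Type*} [Field 𝕜] [LinearOrder 𝕜] [IsStrictOrderedRing 𝕜]

theorem dualFG_comap {V W : Type*} [AddCommGroup V] [Module 𝕜 V] [AddCommGroup W] [Module 𝕜 W]
    {C : PointedCone 𝕜 W} (hC : C.DualFG .id) (f : V →ₗ[𝕜] W) : (C.comap f).DualFG .id := by
  obtain ⟨S, rfl⟩ := hC
  have hcomap : (dual .id (S : Set (Dual 𝕜 W))).comap f = dual f.dualMap S := rfl
  rw [hcomap]
  exact (PointedCone.DualFG.dual_of_finset f.dualMap S).id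

theorem dualFG_positive_pi (ι : Type*) [Finite ι] : (positive 𝕜 (ι → 𝕜)).DualFG .id := by
  have hpos : positive 𝕜 (ι → 𝕜) =
      dual .id (range (LinearMap.proj (R := 𝕜) (φ := fun _ : ι ↦ 𝕜))) := by
    ext x
    simp [PointedCone.mem_dual, Pi.le_def]
  rw [hpos]
  exact .dual_of_finite _ (finite_range _)

theorem dualFG_positive_self : (positive 𝕜 𝕜).DualFG .id := by
  have hpos : positive 𝕜 𝕜 = dual .id {(LinearMap.id : Dual 𝕜 𝕜)} := by
    ext x
    simp [PointedCone.mem_dual]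
  rw [hpos]
  exact .dual_of_finite _ (finite_singleton _)

variable {E F : Type*}
  [AddCommGroup E] [Module 𝕜 E] [PartialOrder E] [IsOrderedAddMonoid E] [PosSMulMono 𝕜 E]
  [AddCommGroup F] [Module 𝕜 F] [PartialOrder F] [IsOrderedAddMonoid F] [PosSMulMono 𝕜 F]

theorem dualFG_positive_prod (hE : (positive 𝕜 E).DualFG .id) (hF : (positive 𝕜 F).DualFG .id) :
    (positive 𝕜 (E × F)).DualFG .id :=
  (dualFG_comap hE (.fst 𝕜 E F)).inf (dualFG_comap hF (.snd 𝕜 E F))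

theorem mem_positive_sup_range {M : Type*} [AddCommGroup M] [Module 𝕜 M] {B : M →ₗ[𝕜] F} {t : F} :
    t ∈ positive 𝕜 F ⊔ (B.range : PointedCone 𝕜 F) ↔ ∃ y, B y ≤ t := by
  simp [mem_sup_ofSubmodule]

end PositiveCone

section PolyhedralEpigraph

theorem dual_apply_mk {R M : Type*} [CommSemiring R] [AddCommMonoid M] [Module R M]
    (g : Dual R (M × R)) (u : M) (r : R) :
    g (u, r) = g (u, 0) + r * g (0, 1) := by
  rw [← smul_eq_mul, ← map_smul, ← map_add]
  simp

theorem apply_mk_eq_of_flat {R M : Type*} [CommSemiring R] [AddCommMonoid M] [Module R M]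
    {g : Dual R (M × R)} (hg : g (0, 1) = 0) (u : M) (r r' : R) : g (u, r) = g (u, r') := by
  rw [dual_apply_mk g u r, dual_apply_mk g u r', hg, mul_zero, mul_zero]

variable {𝕜 V : Type*} [Field 𝕜] [AddCommGroup V] [Module 𝕜 V]

/-- The linear function of which the halfspace `g ≥ 0` is the epigraph when `0 < g (0, 1)`. -/
def heightOf (g : Dual 𝕜 (V × 𝕜)) : Dual 𝕜 V :=
  -(g (0, 1))⁻¹ • g ∘ₗ .inl 𝕜 V 𝕜

variable [LinearOrder 𝕜] [IsStrictOrderedRing 𝕜]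

theorem heightOf_le_iff {g : Dual 𝕜 (V × 𝕜)} (hg : 0 < g (0, 1)) {u : V} {r : 𝕜} :
    heightOf g u ≤ r ↔ 0 ≤ g (u, r) := by
  have : heightOf g u = -g (u, 0) / g (0, 1) := by
    simp [heightOf, div_eq_mul_inv, mul_comm]
  rw [this, div_le_iff₀ hg, dual_apply_mk g u r, neg_le_iff_add_nonneg']

theorem exists_pos_of_bddBelow {G : Set (Dual 𝕜 (V × 𝕜))} (hup : (0, 1) ∈ dual .id G) {u : V}
    (hne : {r | (u, r) ∈ dual .id G}.Nonempty) (hbdd : BddBelow {r | (u, r) ∈ dual .id G}) :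
    ∃ g ∈ G, 0 < g (0, 1) := by
  by_contra! hflat
  obtain ⟨r₀, hr₀⟩ := hne
  obtain ⟨b, hb⟩ := hbdd
  refine (sub_one_lt b).not_ge (hb fun g hg ↦ ?_)
  have hg_flat : g (0, 1) = 0 := (hflat g hg).antisymm (hup hg)
  exact (hr₀ hg).trans_eq (apply_mk_eq_of_flat hg_flat u r₀ (b - 1))

theorem exists_isLeast_sup' {C : PointedCone 𝕜 (V × 𝕜)} (hC : C.DualFG .id)
    (hup : ((0, 1) : V × 𝕜) ∈ C) {u₀ : V} (hne : {r | (u₀, r) ∈ C}.Nonempty)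
    (hbdd : BddBelow {r | (u₀, r) ∈ C}) :
    ∃ (S : Finset (Dual 𝕜 V)) (hS : S.Nonempty), ∀ u, {r | (u, r) ∈ C}.Nonempty →
      IsLeast {r | (u, r) ∈ C} (S.sup' hS fun g ↦ g u) := by
  classical
  obtain ⟨G, rfl⟩ := hC
  obtain ⟨g₀, hg₀, hg₀_pos⟩ := exists_pos_of_bddBelow hup hne hbdd
  refine ⟨{g ∈ G | 0 < g (0, 1)}.image heightOf,
    ⟨heightOf g₀, Finset.mem_image_of_mem _ (Finset.mem_filter.2 ⟨hg₀, hg₀_pos⟩)⟩,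
    fun u ⟨r, hr⟩ ↦ ⟨fun g hg ↦ ?_, fun r' hr' ↦ Finset.sup'_le _ _ fun h hh ↦ ?_⟩⟩
  · obtain hg_flat | hg_pos := (hup hg).eq_or_lt
    · exact (hr hg).trans_eq (apply_mk_eq_of_flat hg_flat.symm u r _)
    · exact (heightOf_le_iff hg_pos).1 <| Finset.le_sup' (fun h : Dual 𝕜 V ↦ h u) <|
        Finset.mem_image_of_mem _ <| Finset.mem_filter.2 ⟨hg, hg_pos⟩
  · obtain ⟨g, hg, rfl⟩ := Finset.mem_image.1 hh
    obtain ⟨hgG, hg_pos⟩ := Finset.mem_filter.1 hg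
    exact (heightOf_le_iff hg_pos).2 (hr' hgG)

end PolyhedralEpigraph

section LinearProgram

section Argmin

variable {E F : Type*} [AddCommGroup E] [Module ℝ E] [AddCommGroup F] [Module ℝ F]
  [PartialOrder F]

/-- The optimal solutions of the linear program `min {d y | B y ≤ t}`. -/
def lpArgmin (B : E →ₗ[ℝ] F) (d : Dual ℝ E) (t : F) : Set E :=
  {y | B y ≤ t ∧ ∀ y', B y' ≤ t → d y ≤ d y'}

theorem lpArgmin_eq {B : E →ₗ[ℝ] F} {d : Dual ℝ E} {t : F} {a : ℝ}
    (ha : IsLeast (d '' {y | B y ≤ t}) a) : lpArgmin B d t = {y | B.prod d y ≤ (t, a)} := by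
  obtain ⟨⟨y₀, hy₀, rfl⟩, hlower⟩ := ha
  ext y
  exact and_congr_right fun _ ↦
    ⟨fun hy ↦ hy y₀ hy₀, fun hy y' hy' ↦ hy.trans (hlower ⟨y', hy', rfl⟩)⟩

end Argmin

theorem lipschitzWith_sup' {α ι : Type*} [PseudoMetricSpace α] {K : ℝ≥0} {s : Finset ι}
    (hs : s.Nonempty) {f : ι → α → ℝ} (hf : ∀ i ∈ s, LipschitzWith K (f i)) :
    LipschitzWith K fun a ↦ s.sup' hs fun i ↦ f i a :=
  .of_le_add_mul K fun a b ↦ Finset.sup'_le _ _ fun i hi ↦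
    ((hf i hi).le_add_mul a b).trans <| by gcongr; exact Finset.le_sup' (fun i ↦ f i b) hi

theorem exists_lipschitzWith_sup'_dual {V : Type*} [NormedAddCommGroup V] [NormedSpace ℝ V]
    [FiniteDimensional ℝ V] {S : Finset (Dual ℝ V)} (hS : S.Nonempty) :
    ∃ K, LipschitzWith K fun u ↦ S.sup' hS fun g ↦ g u :=
  ⟨S.sup fun g ↦ ‖LinearMap.toContinuousLinearMap g‖₊, lipschitzWith_sup' hS fun g hg ↦
    (LinearMap.toContinuousLinearMap g).lipschitz.weaken <|
      Finset.le_sup (f := fun g ↦ ‖LinearMap.toContinuousLinearMap g‖₊) hg⟩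

theorem isLeast_upperClosure {α : Type*} [PartialOrder α] {s : Set α} {a : α} :
    IsLeast (upperClosure s : Set α) a ↔ IsLeast s a := by
  rw [IsLeast, IsLeast, lowerBounds_upperClosure]
  refine and_congr_left fun ha ↦ ⟨fun ⟨b, hb, hba⟩ ↦ ?_, fun h ↦ subset_upperClosure h⟩
  rwa [(ha hb).antisymm hba]

variable {E F : Type*} [AddCommGroup E] [Module ℝ E]
  [NormedAddCommGroup F] [NormedSpace ℝ F] [FiniteDimensional ℝ F]
  [PartialOrder F] [IsOrderedAddMonoid F] [PosSMulMono ℝ F]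

theorem exists_lipschitzWith_isLeast (hF : (positive ℝ F).DualFG .id) (B : E →ₗ[ℝ] F)
    (q : Dual ℝ E) {t₀ : F} (hne : {y | B y ≤ t₀}.Nonempty)
    (hbdd : BddBelow (q '' {y | B y ≤ t₀})) :
    ∃ (K : ℝ≥0) (φ : F → ℝ), LipschitzWith K φ ∧
      ∀ t, {y | B y ≤ t}.Nonempty → IsLeast (q '' {y | B y ≤ t}) (φ t) := by
  let epi := positive ℝ (F × ℝ) ⊔ ((B.prod q).range : PointedCone ℝ (F × ℝ))
  have mem_epi (t : F) (r : ℝ) : (t, r) ∈ epi ↔ ∃ y, B y ≤ t ∧ q y ≤ r := mem_positive_sup_range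
  have fibre_eq (t : F) : {r | (t, r) ∈ epi} = upperClosure (q '' {y | B y ≤ t}) := by
    ext r
    simp [mem_epi]
  have hepi : epi.DualFG .id :=
    dualFG_sup_ofSubmodule (dualFG_positive_prod hF dualFG_positive_self)
      (IsNoetherian.noetherian _)
  have hup : ((0, 1) : F × ℝ) ∈ epi := (mem_epi 0 1).2 ⟨0, by simp, by simp⟩
  have fibre_nonempty {t : F} (ht : {y | B y ≤ t}.Nonempty) : {r | (t, r) ∈ epi}.Nonempty := by
    rw [fibre_eq]
    exact (ht.image q).mono subset_upperClosure
  obtain ⟨S, hS, hleast⟩ := exists_isLeast_sup' hepi hup (fibre_nonempty hne)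
    (by rwa [fibre_eq, bddBelow_upperClosure])
  obtain ⟨K, hK⟩ := exists_lipschitzWith_sup'_dual hS
  refine ⟨K, _, hK, fun t ht ↦ ?_⟩
  rw [← isLeast_upperClosure, ← fibre_eq]
  exact hleast t (fibre_nonempty ht)

theorem exists_lipschitzWith_isLeast_lpArgmin (hF : (positive ℝ F).DualFG .id) {B : E →ₗ[ℝ] F}
    {d q : Dual ℝ E} (hfeas : ∀ t, {y | B y ≤ t}.Nonempty) {t₀ : F}
    (hne : (lpArgmin B d t₀).Nonempty) (hbdd : BddBelow (q '' lpArgmin B d t₀)) :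
    ∃ (K : ℝ≥0) (φ : F → ℝ), LipschitzWith K φ ∧ ∀ t, IsLeast (q '' lpArgmin B d t) (φ t) := by
  obtain ⟨y₀, hy₀, hmin⟩ := hne
  obtain ⟨K, φ, hφ, hφ_least⟩ := exists_lipschitzWith_isLeast hF B d ⟨y₀, hy₀⟩
    ⟨d y₀, by rintro _ ⟨y, hy, rfl⟩; exact hmin y hy⟩
  have argmin_eq (t : F) : lpArgmin B d t = {y | B.prod d y ≤ (t, φ t)} :=
    lpArgmin_eq (hφ_least t (hfeas t))
  rw [argmin_eq] at hbdd
  obtain ⟨L, ψ, hψ, hψ_least⟩ := exists_lipschitzWith_isLeast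
    (dualFG_positive_prod hF dualFG_positive_self) (B.prod d) q
    (argmin_eq t₀ ▸ ⟨y₀, hy₀, hmin⟩) hbdd
  refine ⟨_, fun t ↦ ψ (t, φ t), hψ.comp (LipschitzWith.id.prodMk hφ), fun t ↦ ?_⟩
  rw [argmin_eq]
  obtain ⟨y, hy, hyφ⟩ := (hφ_least t (hfeas t)).1
  exact hψ_least (t, φ t) ⟨y, hy, hyφ.le⟩

end LinearProgram

section WeakConvergence

variable {Ω : Type*} [MeasurableSpace Ω] [TopologicalSpace Ω] [OpensMeasurableSpace Ω]
  [HasOuterApproxClosed Ω]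

theorem lintegral_ofReal_le_liminf_of_tendstoUniformly
    {μ : ProbabilityMeasure Ω} {μs : ℕ → ProbabilityMeasure Ω} (hμ : Tendsto μs atTop (𝓝 μ))
    {g : Ω → ℝ} {gs : ℕ → Ω → ℝ} (hg : Continuous g) (hg_nonneg : 0 ≤ g)
    (hgs : TendstoUniformly gs g atTop) :
    ∫⁻ ω, .ofReal (g ω) ∂(μ : Measure Ω) ≤
      liminf (fun l ↦ ∫⁻ ω, .ofReal (gs l ω) ∂(μs l : Measure Ω)) atTop := by
  refine ENNReal.le_of_forall_pos_le_add fun ε hε _ ↦ ?_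
  calc ∫⁻ ω, .ofReal (g ω) ∂(μ : Measure Ω)
    _ ≤ liminf (fun l ↦ ∫⁻ ω, .ofReal (g ω) ∂(μs l : Measure Ω)) atTop :=
        lintegral_le_liminf_lintegral_of_forall_isOpen_measure_le_liminf_measure hg hg_nonneg
          fun G hG ↦ ProbabilityMeasure.le_liminf_measure_open_of_tendsto hμ hG
    _ ≤ liminf (fun l ↦ ∫⁻ ω, .ofReal (gs l ω) ∂(μs l : Measure Ω) + ε) atTop := by
        refine liminf_le_liminf ?_
        filter_upwards [Metric.tendstoUniformly_iff.1 hgs ε hε] with l hl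
        have h_le (ω : Ω) : ENNReal.ofReal (g ω) ≤ .ofReal (gs l ω) + ε := by
          have hω : g ω ≤ gs l ω + ε :=
            sub_le_iff_le_add'.1 ((le_abs_self _).trans (hl ω).le)
          rw [← ENNReal.ofReal_coe_nnreal (p := ε)]
          exact (ENNReal.ofReal_le_ofReal hω).trans ENNReal.ofReal_add_le
        refine (lintegral_mono h_le).trans_eq ?_
        rw [lintegral_add_right _ measurable_const, lintegral_const, measure_univ, mul_one]
    _ = liminf (fun l ↦ ∫⁻ ω, .ofReal (gs l ω) ∂(μs l : Measure Ω)) atTop + ε :=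
        liminf_add_const _ _ _ (by isBoundedDefault) (by isBoundedDefault)

theorem integral_le_of_tendstoUniformly
    {μ : ProbabilityMeasure Ω} {μs : ℕ → ProbabilityMeasure Ω} (hμ : Tendsto μs atTop (𝓝 μ))
    {g : Ω → ℝ} {gs : ℕ → Ω → ℝ} (hg : Continuous g) (hg_nonneg : 0 ≤ g)
    (hgs : TendstoUniformly gs g atTop) (hgs_nonneg : ∀ l, 0 ≤ gs l)
    (hgs_int : ∀ l, Integrable (gs l) (μs l : Measure Ω)) {R : ℝ}
    (hR : ∀ l, ∫ ω, gs l ω ∂(μs l : Measure Ω) ≤ R) : ∫ ω, g ω ∂(μ : Measure Ω) ≤ R := by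
  have hR_nonneg : 0 ≤ R := (integral_nonneg (hgs_nonneg 0)).trans (hR 0)
  have h_lintegral (l : ℕ) : ∫⁻ ω, .ofReal (gs l ω) ∂(μs l : Measure Ω) ≤ .ofReal R := by
    rw [← ofReal_integral_eq_lintegral_ofReal (hgs_int l) (.of_forall (hgs_nonneg l))]
    exact ENNReal.ofReal_le_ofReal (hR l)
  rw [integral_eq_lintegral_of_nonneg_ae (.of_forall hg_nonneg)
    hg.measurable.aestronglyMeasurable]
  refine ENNReal.toReal_le_of_le_ofReal hR_nonneg ?_
  exact (lintegral_ofReal_le_liminf_of_tendstoUniformly hμ hg hg_nonneg hgs).trans <|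
    liminf_le_of_le (by isBoundedDefault) fun b hb ↦
      let ⟨l, hl⟩ := hb.exists
      hl.trans (h_lintegral l)

theorem integrable_of_lipschitzWith {V E : Type*} [NormedAddCommGroup V] [MeasurableSpace V]
    [NormedAddCommGroup E] {μ : Measure V} [IsFiniteMeasure μ] (hμ : Integrable id μ)
    {K : ℝ≥0} {g : V → E} (hg : LipschitzWith K g) : Integrable g μ := by
  have h_centred : Integrable (fun v ↦ g v - g 0) μ :=
    memLp_one_iff_integrable.1 <|
      (hg.sub (.const (g 0))).comp_memLp (sub_self _) (memLp_one_iff_integrable.2 hμ)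
  simpa only [Pi.add_def, sub_add_cancel] using h_centred.add (integrable_const (g 0))

theorem integral_le_of_lipschitzWith_of_tendsto {U V : Type*} [PseudoMetricSpace U]
    [NormedAddCommGroup V] [MeasurableSpace V] [OpensMeasurableSpace V]
    {μ : ProbabilityMeasure V} {μs : ℕ → ProbabilityMeasure V} (hμ : Tendsto μs atTop (𝓝 μ))
    (hμs : ∀ l, Integrable id (μs l : Measure V)) {x : U} {xs : ℕ → U}
    (hx : Tendsto xs atTop (𝓝 x)) {K : ℝ≥0} {g : U × V → ℝ} (hg : LipschitzWith K g)
    (hg_nonneg : 0 ≤ g) {R : ℝ} (hR : ∀ l, ∫ v, g (xs l, v) ∂(μs l : Measure V) ≤ R) :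
    ∫ v, g (x, v) ∂(μ : Measure V) ≤ R := by
  have hg_slice (u : U) : LipschitzWith (K * 1) fun v ↦ g (u, v) :=
    hg.comp (LipschitzWith.prodMk_left u)
  have hg_unif : UniformContinuous₂ fun u v ↦ g (u, v) := hg.uniformContinuous
  have hgs : TendstoUniformly (fun l v ↦ g (xs l, v)) (fun v ↦ g (x, v)) atTop :=
    fun W hW ↦ hx.eventually (hg_unif.tendstoUniformly W hW)
  exact integral_le_of_tendstoUniformly hμ (hg_slice x).continuous (fun v ↦ hg_nonneg (x, v)) hgs
    (fun l v ↦ hg_nonneg (xs l, v)) (fun l ↦ integrable_of_lipschitzWith (hμs l) (hg_slice _)) hR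

end WeakConvergence

section BilevelLinear

variable {n m s : ℕ} {c : Fin n → ℝ} {q d : Fin m → ℝ} {A : Matrix (Fin s) (Fin m) ℝ}
  {T : Matrix (Fin s) (Fin n) ℝ}

theorem Psi_eq_lpArgmin (x : Fin n → ℝ) (z : Fin s → ℝ) :
    Psi d A T x z = lpArgmin A.mulVecLin (dotProductEquiv ℝ (Fin m) d) (T *ᵥ x + z) :=
  rfl

theorem fE_eq_of_isLeast {x : Fin n → ℝ} {z : Fin s → ℝ} {a : ℝ}
    (ha : IsLeast ((q ⬝ᵥ ·) '' Psi d A T x z) a) : fE c q d A T x z = ↑(c ⬝ᵥ x + a) := by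
  have h_image : (fun y ↦ ((q ⬝ᵥ y : ℝ) : EReal)) '' Psi d A T x z =
      Real.toEReal '' ((q ⬝ᵥ ·) '' Psi d A T x z) := by
    rw [image_image]
  rw [fE, h_image, (EReal.coe_strictMono.monotone.map_isLeast ha).csInf_eq, EReal.coe_add]

theorem Psi_nonempty_of_mem_domf {p : (Fin n → ℝ) × (Fin s → ℝ)} (hp : p ∈ domf c q d A T) :
    (Psi d A T p.1 p.2).Nonempty := by
  by_contra! h_empty
  exact hp.1 (by simp [fE, h_empty])

theorem bddBelow_image_Psi_of_mem_domf {p : (Fin n → ℝ) × (Fin s → ℝ)}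
    (hp : p ∈ domf c q d A T) : BddBelow ((q ⬝ᵥ ·) '' Psi d A T p.1 p.2) := by
  have h_ne_bot : sInf ((fun y ↦ ((q ⬝ᵥ y : ℝ) : EReal)) '' Psi d A T p.1 p.2) ≠ ⊥ :=
    fun h ↦ hp.2 (by simp [fE, h])
  obtain ⟨b, -, hb⟩ := EReal.lt_iff_exists_real_btwn.1 h_ne_bot.bot_lt
  refine ⟨b, ?_⟩
  rintro _ ⟨y, hy, rfl⟩
  exact EReal.coe_le_coe_iff.1 (hb.le.trans (sInf_le ⟨y, hy, rfl⟩))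

theorem exists_lipschitzWith_fE_eq (hdom : (domf c q d A T).Nonempty) (hP : Pfeas A T = univ) :
    ∃ (K : ℝ≥0) (f : (Fin n → ℝ) × (Fin s → ℝ) → ℝ), LipschitzWith K f ∧
      ∀ x z, fE c q d A T x z = f (x, z) := by
  obtain ⟨p, hp⟩ := hdom
  have h_feas (t : Fin s → ℝ) : {y | A.mulVecLin y ≤ t}.Nonempty := by
    have h : ((0, t) : (Fin n → ℝ) × (Fin s → ℝ)) ∈ Pfeas A T := hP ▸ mem_univ _
    simpa [Pfeas, LowerFeas] using h
  have h_ne := Psi_nonempty_of_mem_domf hp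
  have h_bdd := bddBelow_image_Psi_of_mem_domf hp
  rw [Psi_eq_lpArgmin] at h_ne h_bdd
  obtain ⟨K, φ, hφ, hφ_least⟩ := exists_lipschitzWith_isLeast_lpArgmin
    (dualFG_positive_pi (Fin s)) (q := dotProductEquiv ℝ (Fin m) q) h_feas h_ne h_bdd
  let cost := (dotProductEquiv ℝ (Fin n) c ∘ₗ .fst ℝ _ (Fin s → ℝ)).toContinuousLinearMap
  let rhs := (T.mulVecLin.coprod (.id (R := ℝ) (M := Fin s → ℝ))).toContinuousLinearMap
  exact ⟨_, fun p ↦ cost p + φ (rhs p), cost.lipschitz.add (hφ.comp rhs.lipschitz),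
    fun x z ↦ fE_eq_of_isLeast (Psi_eq_lpArgmin (A := A) x z ▸ hφ_least (T *ᵥ x + z))⟩

end BilevelLinear

theorem IsPolyhedron.isClosed {n : ℕ} {X : Set (Fin n → ℝ)} (hX : IsPolyhedron X) :
    IsClosed X := by
  obtain ⟨k, B, b, rfl⟩ := hX
  exact isClosed_le (continuous_const.matrix_mulVec continuous_id) continuous_const

theorem C2_closed_wrt_weak_convergence_general {n m s : ℕ}
    {c : Fin n → ℝ} {q d : Fin m → ℝ}
    {A : Matrix (Fin s) (Fin m) ℝ} {T : Matrix (Fin s) (Fin n) ℝ}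
    (hdom : (domf c q d A T).Nonempty) (hP : Pfeas A T = univ)
    {X : Set (Fin n → ℝ)} (hX : IsClosed X)
    {ν : Measure ℝ} [IsProbabilityMeasure ν] (_hν : ∫⁻ b, ‖b‖₊ ∂ν < ⊤)
    {μl : ℕ → ProbabilityMeasure (Fin s → ℝ)} {μ : ProbabilityMeasure (Fin s → ℝ)}
    (hμl_moment : ∀ l, ∫⁻ z, ‖z‖₊ ∂(μl l : Measure (Fin s → ℝ)) < ⊤)
    (hμ : Tendsto μl atTop (𝓝 μ)) {xl : ℕ → Fin n → ℝ} {x : Fin n → ℝ}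
    (hx : Tendsto xl atTop (𝓝 x)) (hfeas : ∀ l, xl l ∈ C2 c q d A T X ν (μl l)) :
    x ∈ C2 c q d A T X ν μ := by
  refine ⟨hX.mem_of_tendsto hx (.of_forall fun l ↦ (hfeas l).1), fun η ↦ ?_⟩
  obtain ⟨K, f, hf, hfE⟩ := exists_lipschitzWith_fE_eq hdom hP
  have h_excess (l : ℕ) := (hfeas l).2 η
  simp only [hfE, EReal.toReal_coe] at h_excess ⊢
  exact integral_le_of_lipschitzWith_of_tendsto hμ
    (fun l ↦ ⟨measurable_id.aestronglyMeasurable, hμl_moment l⟩) hx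
    ((hf.sub (.const η)).max_const 0) (fun _ ↦ le_max_right _ _) h_excess

theorem C2_closed_wrt_weak_convergence {n m s : ℕ}
    (c : Fin n → ℝ) (q d : Fin m → ℝ)
    (A : Matrix (Fin s) (Fin m) ℝ) (T : Matrix (Fin s) (Fin n) ℝ)
    (hdom : (domf c q d A T).Nonempty) (hP : Pfeas A T = Set.univ)
    (X : Set (Fin n → ℝ)) (hXpoly : IsPolyhedron X) (hXne : X.Nonempty)
    (ν : Measure ℝ) [IsProbabilityMeasure ν]
    (hν : ∫⁻ b, ‖b‖₊ ∂ν < ⊤)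
    (μl : ℕ → ProbabilityMeasure (Fin s → ℝ)) (μ : ProbabilityMeasure (Fin s → ℝ))
    (hμlmom : ∀ l : ℕ, ∫⁻ z, ‖z‖₊ ∂((μl l : Measure (Fin s → ℝ))) < ⊤)
    (hμmom : ∫⁻ z, ‖z‖₊ ∂(μ : Measure (Fin s → ℝ)) < ⊤)
    (hμ : Filter.Tendsto μl Filter.atTop (𝓝 μ))
    (xl : ℕ → (Fin n → ℝ)) (x : Fin n → ℝ)
    (hx : Filter.Tendsto xl Filter.atTop (𝓝 x))
    (hfeas : ∀ l : ℕ, xl l ∈ C2 c q d A T X ν (μl l)) :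
    x ∈ C2 c q d A T X ν μ :=
  C2_closed_wrt_weak_convergence_general hdom hP hXpoly.isClosed hν hμlmom hμ hx hfeas

end
end

section
/- Assume dom f ≠ ∅, P = ℝⁿ × ℝˢ, let X ⊆ ℝⁿ be nonempty and compact, and let g : ℝⁿ → ℝ be lower semicontinuous. Then: (a) the optimal value function φ₁(μ) := inf { g(x) : x ∈ C₁(μ) } (taking value +∞ when C₁(μ) = ∅) is lower semicontinuous with respect to weak convergence at every μ with C₁(μ) ≠ ∅; and (b) if additionally ν ∈ 𝓜¹₁, the function φ₂(μ) := inf { g(x) : x ∈ C₂(μ) } is lower semicontinuous with respect to weak convergence on 𝓜¹_s at every μ with C₂(μ) ≠ ∅. -/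
open MeasureTheory Matrix Set Topology Filter
open scoped ENNReal NNReal

noncomputable section

/-!
Moving from a feasible point along a direction that keeps its active constraints active and does
not increase the objective makes a further constraint active, unless it is a recession direction.
So if the objective is nonnegative on the recession cone, a feasible linear program is solved by
one of finitely many basic solutions, each linear in the right-hand side. This applies to the
lexicographic objective `(dᵀy, qᵀy)`, because finiteness of `f` at one point excludes descending
recession directions. Hence at each `(x, z)` the value of `f` is `cᵀx + qᵀy_J(x, z)` for an index
set `J` whose basic solution `y_J(x, z)` lies in `Ψ(x, z)`; in particular `f` grows at most
linearly. Since every right-hand side is feasible there is `w` with `A w < 0`, so minimality need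
only be tested against strictly feasible points. Therefore the graph of `Ψ` is closed and `f` is
lower semicontinuous.

If `x_k → x` and `μ_k → μ` weakly, then `δ_{x_k} ⊗ μ_k → δ_x ⊗ μ` weakly. The portmanteau theorem
for these products shows that both dominance constraints define closed sets of pairs `(x, μ)`, and
minimising a lower semicontinuous function over the sections of a closed set, within a compact
set, gives a lower semicontinuous value.
-/

section LinearProgram

theorem exists_comp_comp_eq_self {K V W : Type*} [DivisionRing K] [AddCommGroup V] [Module K V]
    [AddCommGroup W] [Module K W] (f : V →ₗ[K] W) : ∃ g : W →ₗ[K] V, f ∘ₗ g ∘ₗ f = f := by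
  obtain ⟨r, hr⟩ := f.rangeRestrict.exists_rightInverse_of_surjective f.range_rangeRestrict
  obtain ⟨g, hg⟩ := LinearMap.exists_extend r
  refine ⟨g, LinearMap.ext fun v => ?_⟩
  have hgr : g (f v) = r (f.rangeRestrict v) := LinearMap.congr_fun hg (f.rangeRestrict v)
  have hrv : f.rangeRestrict (r (f.rangeRestrict v)) = f.rangeRestrict v :=
    LinearMap.congr_fun hr (f.rangeRestrict v)
  simpa [hgr] using congrArg Subtype.val hrv

variable {K E L ι : Type*} [Field K] [AddCommGroup E] [Module K E]

/-- The basic solution of the system `a y ≤ b` for the index set `J`: a solution of `a y i = b i`,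
`i ∈ J`, chosen linearly in `b`. It is junk when these equations are inconsistent. -/
def basicSolution (a : E →ₗ[K] ι → K) (J : Set ι) : (ι → K) →ₗ[K] E :=
  (exists_comp_comp_eq_self (LinearMap.funLeft K K ((↑) : J → ι) ∘ₗ a)).choose ∘ₗ
    LinearMap.funLeft K K (↑)

theorem eqOn_basicSolution {a : E →ₗ[K] ι → K} {J : Set ι} {b : ι → K} {y : E}
    (hy : EqOn (a y) b J) : EqOn (a (basicSolution a J b)) b J := by
  have hgen := LinearMap.congr_fun
    (exists_comp_comp_eq_self (LinearMap.funLeft K K ((↑) : J → ι) ∘ₗ a)).choose_spec y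
  have hres : LinearMap.funLeft K K ((↑) : J → ι) (a y) = LinearMap.funLeft K K (↑) b :=
    funext fun i => hy i.2
  simp only [LinearMap.comp_apply, hres] at hgen
  exact fun i hi => congrFun hgen ⟨i, hi⟩

/-- The constraints of `a y ≤ b` that hold with equality at `y`. -/
def activeSet (a : E →ₗ[K] ι → K) (b : ι → K) (y : E) : Set ι := {i | a y i = b i}

variable [LinearOrder K] [IsStrictOrderedRing K] [AddCommGroup L] [LinearOrder L]
  [IsOrderedAddMonoid L] [Module K L] [PosSMulMono K L]
  {a : E →ₗ[K] ι → K} {b : ι → K} {y w : E}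

theorem exists_activeSet_ssubset [Finite ι] {ℓ : E →ₗ[K] L} (hy : a y ≤ b) (hℓ : ℓ w ≤ 0)
    (hw : EqOn (a w) 0 (activeSet a b y)) (hpos : ¬ a w ≤ 0) :
    ∃ y', a y' ≤ b ∧ ℓ y' ≤ ℓ y ∧ activeSet a b y ⊂ activeSet a b y' := by
  -- Ratio test: follow `w` until the first constraint blocks.
  obtain ⟨k, hk, hmin⟩ := exists_min_image {i | 0 < a w i} (fun i => (b i - a y i) / a w i)
    (toFinite _) (by simpa [Pi.le_def, Set.Nonempty] using hpos)
  rw [mem_ofPred_eq] at hk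
  set t := (b k - a y k) / a w k with ht
  have ht0 : 0 ≤ t := div_nonneg (sub_nonneg.2 (hy k)) hk.le
  have happly (i : ι) : a (y + t • w) i = a y i + t * a w i := by simp
  refine ⟨y + t • w, fun i => ?_, ?_, ?_⟩
  · rw [happly]
    rcases le_or_gt (a w i) 0 with hi | hi
    · linarith [hy i, mul_nonpos_of_nonneg_of_nonpos ht0 hi]
    · linarith [(le_div_iff₀ hi).1 (hmin i hi)]
  · simpa using smul_nonpos_of_nonneg_of_nonpos ht0 hℓ
  · refine ⟨fun i hi => ?_, fun hsub => hk.ne' (hw (hsub ?_))⟩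
    · simpa [activeSet, hw hi] using hi
    · simp [activeSet, ht, hk.ne']

theorem map_eq_zero_of_eqOn_activeSet [Finite ι] {ℓ : E →ₗ[K] L}
    (hrec : ∀ w, a w ≤ 0 → 0 ≤ ℓ w) (hy : a y ≤ b)
    (hmax : ∀ y', a y' ≤ b → ℓ y' ≤ ℓ y → ¬ activeSet a b y ⊂ activeSet a b y')
    (hw : EqOn (a w) 0 (activeSet a b y)) : a w = 0 := by
  have hnonpos : ∀ w, ℓ w ≤ 0 → EqOn (a w) 0 (activeSet a b y) → a w ≤ 0 := by
    intro w hℓ hw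
    by_contra hpos
    obtain ⟨y', hy', hle, hlt⟩ := exists_activeSet_ssubset hy hℓ hw hpos
    exact hmax y' hy' hle hlt
  have hzero : ∀ w, ℓ w ≤ 0 → EqOn (a w) 0 (activeSet a b y) → a w = 0 := by
    intro w hℓ hw
    have hle := hnonpos w hℓ hw
    have hge := hnonpos (-w) (by simpa using hrec w hle) fun i hi => by simpa using hw hi
    exact le_antisymm hle (by simpa using hge)
  rcases le_total (ℓ w) 0 with hℓ | hℓ
  · exact hzero w hℓ hw
  · simpa using hzero (-w) (by simpa using hℓ) fun i hi => by simpa using hw hi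

theorem exists_basicSolution_le [Finite ι] {ℓ : E →ₗ[K] L} (hrec : ∀ w, a w ≤ 0 → 0 ≤ ℓ w)
    (hy : a y ≤ b) :
    ∃ J, a (basicSolution a J b) ≤ b ∧ ℓ (basicSolution a J b) ≤ ℓ y := by
  obtain ⟨v, ⟨hv, hvy⟩, hmax⟩ := Finite.exists_maximalFor' (activeSet a b)
    {v | a v ≤ b ∧ ℓ v ≤ ℓ y} (toFinite _) ⟨y, hy, le_rfl⟩
  set u := basicSolution a (activeSet a b v) b
  have hu : EqOn (a u) b (activeSet a b v) := eqOn_basicSolution (y := v) fun _ hi => hi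
  have huv : a (u - v) = 0 := by
    refine map_eq_zero_of_eqOn_activeSet hrec hv (fun v' hv' hle hlt => ?_) fun i hi => ?_
    · exact hlt.2 (hmax ⟨hv', hle.trans hvy⟩ hlt.1)
    · simpa [hu hi, sub_eq_zero] using Eq.symm hi
  have hau : a u = a v := by simpa [sub_eq_zero] using huv
  have hℓuv : ℓ u ≤ ℓ v := by simpa using hrec (v - u) (by simp [hau])
  exact ⟨activeSet a b v, hau.trans_le hv, hℓuv.trans hvy⟩

theorem exists_isMinOn_basicSolution [Finite ι] {ℓ : E →ₗ[K] L}
    (hrec : ∀ w, a w ≤ 0 → 0 ≤ ℓ w) (hfeas : {y | a y ≤ b}.Nonempty) :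
    ∃ J, a (basicSolution a J b) ≤ b ∧ IsMinOn ℓ {y | a y ≤ b} (basicSolution a J b) := by
  obtain ⟨y₀, hy₀⟩ := hfeas
  obtain ⟨J₀, hJ₀, -⟩ := exists_basicSolution_le hrec hy₀
  obtain ⟨J, hJ, hmin⟩ := exists_min_image {J | a (basicSolution a J b) ≤ b}
    (fun J => ℓ (basicSolution a J b)) (toFinite _) ⟨J₀, hJ₀⟩
  refine ⟨J, hJ, fun y hy => ?_⟩
  obtain ⟨J', hJ', hle⟩ := exists_basicSolution_le hrec hy
  exact (hmin J' hJ').trans hle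

theorem isMinOn_iff_forall_strictly_feasible {ℓ : E →ₗ[K] K} (hw : ∀ i, a w i < 0) :
    IsMinOn ℓ {v | a v ≤ b} y ↔ ∀ v, (∀ i, a v i < b i) → ℓ y ≤ ℓ v := by
  refine ⟨fun hmin v hv => hmin fun i => (hv i).le, fun hmin v hv => ?_⟩
  by_contra hlt
  replace hlt : ℓ v < ℓ y := not_le.1 hlt
  obtain ⟨t, ht, htlt⟩ := exists_pos_mul_lt (sub_pos.2 hlt) (ℓ w)
  have hle : ℓ y ≤ ℓ (v + t • w) := hmin _ fun i => by
    have hvi : a v i ≤ b i := hv i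
    simpa using add_lt_of_le_of_neg hvi (mul_neg_of_pos_of_neg ht (hw i))
  simp only [map_add, map_smul, smul_eq_mul] at hle
  linarith

end LinearProgram

theorem isClosed_setOf_isMinOn {E ι : Type*} [AddCommGroup E] [Module ℝ E] [TopologicalSpace E]
    [Finite ι] {a : E →ₗ[ℝ] ι → ℝ} {ℓ : E →ₗ[ℝ] ℝ} {w : E} (ha : Continuous a)
    (hℓ : Continuous ℓ) (hw : ∀ i, a w i < 0) :
    IsClosed {p : (ι → ℝ) × E | a p.2 ≤ p.1 ∧ IsMinOn ℓ {v | a v ≤ p.1} p.2} := by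
  have hopen (v : E) : IsOpen {p : (ι → ℝ) × E | ∀ i, a v i < p.1 i} := by
    simp only [ofPred_forall]
    exact isOpen_iInter_of_finite fun i => isOpen_lt (by fun_prop) (by fun_prop)
  simp only [isMinOn_iff_forall_strictly_feasible hw, ofPred_and, ofPred_forall]
  exact (isClosed_le (by fun_prop) (by fun_prop)).inter <| isClosed_iInter fun v =>
    isClosed_imp (hopen v) (isClosed_le (by fun_prop) (by fun_prop))

section Lexicographic

instance posSMulMono_lexProd {K M N : Type*} [Zero K] [PartialOrder K] [Zero M] [PartialOrder M]
    [Zero N] [Preorder N] [SMulWithZero K M] [SMulWithZero K N] [PosSMulStrictMono K M]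
    [PosSMulMono K N] : PosSMulMono K (M ×ₗ N) where
  smul_le_smul_of_nonneg_left t ht x y hxy := by
    rcases ht.eq_or_lt with rfl | ht'
    · exact Prod.Lex.le_iff.2 (.inr ⟨by simp, by simp⟩)
    · refine Prod.Lex.le_iff.2 <| (Prod.Lex.le_iff.1 hxy).imp (smul_lt_smul_of_pos_left · ht') ?_
      exact fun h => ⟨congrArg (t • ·) h.1, smul_le_smul_of_nonneg_left h.2 ht⟩

variable {K E M N : Type*} [Semiring K] [AddCommMonoid E] [Module K E] [AddCommMonoid M]
  [Module K M] [AddCommMonoid N] [Module K N]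

/-- The objective that minimises `f` first and breaks ties with `g`. -/
def lexObjective (f : E →ₗ[K] M) (g : E →ₗ[K] N) : E →ₗ[K] M ×ₗ N :=
  (toLexLinearEquiv K (M × N)).toLinearMap ∘ₗ f.prod g

variable [PartialOrder M] [PartialOrder N] {f : E →ₗ[K] M} {g : E →ₗ[K] N}

theorem lexObjective_le_iff {y y' : E} :
    lexObjective f g y ≤ lexObjective f g y' ↔ f y < f y' ∨ f y = f y' ∧ g y ≤ g y' :=
  Prod.Lex.toLex_le_toLex

theorem isMinOn_fst_of_isMinOn_lexObjective {S : Set E} {y : E}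
    (hy : IsMinOn (lexObjective f g) S y) : IsMinOn f S y :=
  fun _ hy' => (lexObjective_le_iff.1 (hy hy')).elim le_of_lt fun h => h.1.le

theorem le_snd_of_isMinOn_lexObjective {S : Set E} {y y' : E}
    (hy : IsMinOn (lexObjective f g) S y) (hyS : y ∈ S) (hy'S : y' ∈ S) (hy' : IsMinOn f S y') :
    g y ≤ g y' :=
  (lexObjective_le_iff.1 (hy hy'S)).elim (fun h => absurd h (hy' hyS).not_gt) And.right

end Lexicographic

theorem integrable_of_forall_exists_eq {Ω ι F : Type*} [MeasurableSpace Ω] {μ : Measure Ω}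
    [Finite ι] [NormedAddCommGroup F] {f : Ω → F} {g : ι → Ω → F} (hf : AEStronglyMeasurable f μ)
    (hg : ∀ i, Integrable (g i) μ) (hfg : ∀ ω, ∃ i, f ω = g i ω) : Integrable f μ := by
  have := Fintype.ofFinite ι
  refine (integrable_finsetSum Finset.univ fun i _ => (hg i).norm).mono' hf
    (.of_forall fun ω => ?_)
  obtain ⟨i, hi⟩ := hfg ω
  rw [hi]
  exact Finset.single_le_sum (f := fun i => ‖g i ω‖) (fun _ _ => norm_nonneg _) (Finset.mem_univ i)

theorem integrable_max_sub_zero {Ω : Type*} [MeasurableSpace Ω] {μ : Measure Ω}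
    [IsFiniteMeasure μ] {f : Ω → ℝ} (hf : Integrable f μ) (η : ℝ) :
    Integrable (fun ω => max (f ω - η) 0) μ :=
  (hf.sub (integrable_const η)).pos_part

section LowerLevel

variable {n m s : ℕ} {c : Fin n → ℝ} {q d : Fin m → ℝ} {A : Matrix (Fin s) (Fin m) ℝ}
  {T : Matrix (Fin s) (Fin n) ℝ} {x : Fin n → ℝ} {z : Fin s → ℝ} {y w : Fin m → ℝ}

theorem mem_psi_iff_isMinOn :
    y ∈ Psi d A T x z ↔ y ∈ LowerFeas A T x z ∧
      IsMinOn (dotProductBilin ℝ ℝ d) (LowerFeas A T x z) y :=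
  Iff.rfl

theorem add_smul_mem_lowerFeas (hy : y ∈ LowerFeas A T x z) (hw : A *ᵥ w ≤ 0) {t : ℝ}
    (ht : 0 ≤ t) : y + t • w ∈ LowerFeas A T x z :=
  calc A *ᵥ (y + t • w) = A *ᵥ y + t • A *ᵥ w := by rw [mulVec_add, mulVec_smul]
    _ ≤ T *ᵥ x + z := add_le_of_le_of_nonpos hy (smul_nonpos_of_nonneg_of_nonpos ht hw)

theorem dotProduct_nonneg_of_mem_psi (hy : y ∈ Psi d A T x z) (hw : A *ᵥ w ≤ 0) :
    0 ≤ d ⬝ᵥ w := by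
  simpa [dotProduct_add] using hy.2 _ (add_smul_mem_lowerFeas hy.1 hw zero_le_one)

theorem fE_eq_bot_of_mem_psi (hy : y ∈ Psi d A T x z) (hw : A *ᵥ w ≤ 0) (hdw : d ⬝ᵥ w = 0)
    (hqw : q ⬝ᵥ w < 0) : fE c q d A T x z = ⊥ := by
  have hray (k : ℕ) : y + (k : ℝ) • w ∈ Psi d A T x z :=
    ⟨add_smul_mem_lowerFeas hy.1 hw k.cast_nonneg, by simpa [dotProduct_add, hdw] using hy.2⟩
  have hbot : sInf ((fun y => ((q ⬝ᵥ y : ℝ) : EReal)) '' Psi d A T x z) = ⊥ := by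
    refine (EReal.eq_bot_iff_forall_lt _).2 fun r => ?_
    obtain ⟨k, hk⟩ := exists_lt_nsmul (neg_pos.2 hqw) (q ⬝ᵥ y - r)
    refine (sInf_le (mem_image_of_mem _ (hray k))).trans_lt (EReal.coe_lt_coe_iff.2 ?_)
    simp only [dotProduct_add, dotProduct_smul, nsmul_eq_mul, smul_eq_mul] at hk ⊢
    linarith
  rw [fE, hbot, EReal.add_bot]

theorem fE_le_of_mem_psi (hy : y ∈ Psi d A T x z) :
    fE c q d A T x z ≤ ((c ⬝ᵥ x + q ⬝ᵥ y : ℝ) : EReal) := by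
  rw [EReal.coe_add]
  exact add_le_add_right (sInf_le (mem_image_of_mem _ hy)) _

theorem psi_nonempty_of_fE_ne_top (h : fE c q d A T x z ≠ ⊤) : (Psi d A T x z).Nonempty := by
  contrapose! h
  simp [fE, h]

theorem lexObjective_nonneg_of_domf_nonempty (hdom : (domf c q d A T).Nonempty)
    (hw : A *ᵥ w ≤ 0) :
    0 ≤ lexObjective (dotProductBilin ℝ ℝ d) (dotProductBilin ℝ ℝ q) w := by
  obtain ⟨⟨x, z⟩, htop, hbot⟩ := hdom
  obtain ⟨y, hy⟩ := psi_nonempty_of_fE_ne_top htop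
  rw [← map_zero (lexObjective (dotProductBilin ℝ ℝ d) (dotProductBilin ℝ ℝ q)),
    lexObjective_le_iff]
  simp only [dotProductBilin_apply_apply, dotProduct_zero]
  refine (dotProduct_nonneg_of_mem_psi hy hw).lt_or_eq.imp_right fun hdw => ⟨hdw, ?_⟩
  by_contra! hqw
  exact hbot (fE_eq_bot_of_mem_psi hy hw hdw.symm hqw)

/-- The basic solution with index set `J` of the lower level problem, as a function of `(x, z)`. -/
def basicResponse (A : Matrix (Fin s) (Fin m) ℝ) (T : Matrix (Fin s) (Fin n) ℝ) (J : Set (Fin s))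
    (x : Fin n → ℝ) (z : Fin s → ℝ) : Fin m → ℝ :=
  basicSolution A.mulVecLin J (T *ᵥ x + z)

theorem continuous_basicResponse (J : Set (Fin s)) :
    Continuous fun p : (Fin n → ℝ) × (Fin s → ℝ) => basicResponse A T J p.1 p.2 :=
  (LinearMap.continuous_of_finiteDimensional _).comp (by fun_prop)

theorem exists_fE_eq_basicResponse (hdom : (domf c q d A T).Nonempty) (hP : Pfeas A T = univ)
    (x : Fin n → ℝ) (z : Fin s → ℝ) :
    ∃ J, basicResponse A T J x z ∈ Psi d A T x z ∧
      fE c q d A T x z = ((c ⬝ᵥ x + q ⬝ᵥ basicResponse A T J x z : ℝ) : EReal) := by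
  have hfeas : (x, z) ∈ Pfeas A T := hP ▸ mem_univ _
  obtain ⟨J, hJ, hmin⟩ := exists_isMinOn_basicSolution (a := A.mulVecLin)
    (fun w hw => lexObjective_nonneg_of_domf_nonempty hdom hw) hfeas
  have hPsi : basicResponse A T J x z ∈ Psi d A T x z :=
    mem_psi_iff_isMinOn.2 ⟨hJ, isMinOn_fst_of_isMinOn_lexObjective hmin⟩
  refine ⟨J, hPsi, (fE_le_of_mem_psi hPsi).antisymm ?_⟩
  rw [EReal.coe_add]
  refine add_le_add_right (le_sInf ?_) _
  rintro _ ⟨y, hy, rfl⟩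
  exact EReal.coe_le_coe_iff.2 (le_snd_of_isMinOn_lexObjective hmin hJ hy.1 hy.2)

theorem isClosed_setOf_mem_psi (hP : Pfeas A T = univ) :
    IsClosed {p : ((Fin n → ℝ) × (Fin s → ℝ)) × (Fin m → ℝ) | p.2 ∈ Psi d A T p.1.1 p.1.2} := by
  obtain ⟨w, hw⟩ : ((0 : Fin n → ℝ), (-1 : Fin s → ℝ)) ∈ Pfeas A T := hP ▸ mem_univ _
  have hw' : ∀ i, A.mulVecLin w i < 0 := fun i => (hw i).trans_lt (by simp)
  have hclosed := isClosed_setOf_isMinOn (a := A.mulVecLin) (ℓ := dotProductBilin ℝ ℝ d)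
    (LinearMap.continuous_of_finiteDimensional _) (LinearMap.continuous_of_finiteDimensional _) hw'
  have hcont : Continuous fun p : ((Fin n → ℝ) × (Fin s → ℝ)) × (Fin m → ℝ) =>
      (T *ᵥ p.1.1 + p.1.2, p.2) := by fun_prop
  exact hclosed.preimage hcont

theorem isClosed_setOf_fE_le (hdom : (domf c q d A T).Nonempty) (hP : Pfeas A T = univ) (β : ℝ) :
    IsClosed {p : (Fin n → ℝ) × (Fin s → ℝ) | fE c q d A T p.1 p.2 ≤ β} := by
  have hunion : {p : (Fin n → ℝ) × (Fin s → ℝ) | fE c q d A T p.1 p.2 ≤ β} =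
      ⋃ J, {p | basicResponse A T J p.1 p.2 ∈ Psi d A T p.1 p.2} ∩
        {p | c ⬝ᵥ p.1 + q ⬝ᵥ basicResponse A T J p.1 p.2 ≤ β} := by
    ext p
    simp only [mem_ofPred_eq, mem_iUnion, mem_inter_iff]
    refine ⟨fun h => ?_, fun ⟨J, hJ, hle⟩ =>
      (fE_le_of_mem_psi hJ).trans (EReal.coe_le_coe_iff.2 hle)⟩
    obtain ⟨J, hJ, hfE⟩ := exists_fE_eq_basicResponse hdom hP p.1 p.2
    exact ⟨J, hJ, EReal.coe_le_coe_iff.1 (hfE ▸ h)⟩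
  rw [hunion]
  refine isClosed_iUnion_of_finite fun J => ?_
  have hJ := continuous_basicResponse (A := A) (T := T) J
  exact ((isClosed_setOf_mem_psi hP).preimage (continuous_id.prodMk hJ)).inter
    (isClosed_le (by fun_prop) (by fun_prop))

theorem lowerSemicontinuous_toReal_fE (hdom : (domf c q d A T).Nonempty)
    (hP : Pfeas A T = univ) :
    LowerSemicontinuous fun p : (Fin n → ℝ) × (Fin s → ℝ) => (fE c q d A T p.1 p.2).toReal := by
  refine lowerSemicontinuous_iff_isClosed_preimage.2 fun β => ?_
  convert isClosed_setOf_fE_le hdom hP β using 1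
  ext p
  obtain ⟨J, -, hfE⟩ := exists_fE_eq_basicResponse hdom hP p.1 p.2
  rw [mem_preimage, mem_Iic, mem_ofPred_eq, hfE, EReal.toReal_coe, EReal.coe_le_coe_iff]

theorem integrable_dotProduct_basicResponse {μ : Measure (Fin s → ℝ)} [IsFiniteMeasure μ]
    (hμ : Integrable id μ) (J : Set (Fin s)) :
    Integrable (fun z => q ⬝ᵥ basicResponse A T J x z) μ :=
  (dotProductBilin ℝ ℝ q ∘ₗ basicSolution A.mulVecLin J).toContinuousLinearMap.integrable_comp
    ((integrable_const (T *ᵥ x)).add hμ)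

theorem integrable_toReal_fE (hdom : (domf c q d A T).Nonempty) (hP : Pfeas A T = univ)
    (x : Fin n → ℝ) {μ : Measure (Fin s → ℝ)} [IsFiniteMeasure μ] (hμ : Integrable id μ) :
    Integrable (fun z => (fE c q d A T x z).toReal) μ := by
  refine integrable_of_forall_exists_eq
    ((lowerSemicontinuous_toReal_fE hdom hP).measurable.comp
      measurable_prodMk_left).aestronglyMeasurable
    (g := fun J z => c ⬝ᵥ x + q ⬝ᵥ basicResponse A T J x z)
    (fun J => (integrable_const (c ⬝ᵥ x)).add (integrable_dotProduct_basicResponse hμ J))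
    fun z => ?_
  obtain ⟨J, -, hfE⟩ := exists_fE_eq_basicResponse hdom hP x z
  exact ⟨J, by rw [hfE, EReal.toReal_coe]⟩

end LowerLevel

section WeakConvergence

variable {Ω : Type*} [MeasurableSpace Ω] [TopologicalSpace Ω] [OpensMeasurableSpace Ω]

theorem upperSemicontinuous_measure_of_isClosed [HasOuterApproxClosed Ω] {F : Set Ω}
    (hF : IsClosed F) : UpperSemicontinuous fun μ : ProbabilityMeasure Ω => (μ : Measure Ω) F :=
  upperSemicontinuous_iff_limsup_le.2 fun _ =>
    ProbabilityMeasure.limsup_measure_closed_le_of_tendsto tendsto_id hF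

theorem lowerSemicontinuous_lintegral_ofReal [HasOuterApproxClosed Ω]
    [SequentialSpace (ProbabilityMeasure Ω)] {h : Ω → ℝ} (hh : LowerSemicontinuous h)
    (hnonneg : 0 ≤ h) :
    LowerSemicontinuous fun μ : ProbabilityMeasure Ω => ∫⁻ ω, ENNReal.ofReal (h ω) ∂μ := by
  have layercake (μ : ProbabilityMeasure Ω) :
      ∫⁻ ω, ENNReal.ofReal (h ω) ∂μ = ∫⁻ t in Ioi (0 : ℝ), (μ : Measure Ω) {ω | t < h ω} :=
    lintegral_eq_lintegral_meas_lt _ (.of_forall hnonneg) hh.measurable.aemeasurable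
  simp_rw [layercake]
  refine lowerSemicontinuous_iff_isClosed_preimage.2 fun r => IsSeqClosed.isClosed ?_
  intro μs μ hle hμ
  calc ∫⁻ t in Ioi (0 : ℝ), (μ : Measure Ω) {ω | t < h ω}
      ≤ ∫⁻ t in Ioi (0 : ℝ), liminf (fun k => (μs k : Measure Ω) {ω | t < h ω}) atTop :=
        lintegral_mono fun t =>
          ProbabilityMeasure.le_liminf_measure_open_of_tendsto hμ (hh.isOpen_preimage t)
    _ ≤ liminf (fun k => ∫⁻ t in Ioi (0 : ℝ), (μs k : Measure Ω) {ω | t < h ω}) atTop :=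
        lintegral_liminf_le fun k =>
          Antitone.measurable fun _ _ hst => measure_mono fun _ => hst.trans_lt
    _ ≤ r := liminf_le_of_frequently_le (.of_forall hle)

theorem toMeasure_diracProba_prod {α Ω : Type*} [MeasurableSpace α] [MeasurableSpace Ω] (x : α)
    (μ : ProbabilityMeasure Ω) :
    ((diracProba x).prod μ : Measure (α × Ω)) = (μ : Measure Ω).map (Prod.mk x) :=
  Measure.dirac_prod x

variable {α : Type*} [MeasurableSpace α] [TopologicalSpace α] [OpensMeasurableSpace α]
  [TopologicalSpace.PseudoMetrizableSpace α] [SecondCountableTopology α]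
  [TopologicalSpace.PseudoMetrizableSpace Ω] [SecondCountableTopology Ω]

theorem continuous_diracProba_prod :
    Continuous fun p : α × ProbabilityMeasure Ω => (diracProba p.1).prod p.2 :=
  ProbabilityMeasure.continuous_prod.comp
    ((continuous_diracProba.comp continuous_fst).prodMk continuous_snd)

theorem upperSemicontinuous_measure_section {F : Set (α × Ω)} (hF : IsClosed F) :
    UpperSemicontinuous fun p : α × ProbabilityMeasure Ω =>
      (p.2 : Measure Ω) {ω | (p.1, ω) ∈ F} := by
  convert (upperSemicontinuous_measure_of_isClosed hF).comp continuous_diracProba_prod using 2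
    with p
  rw [Function.comp_apply, toMeasure_diracProba_prod,
    Measure.map_apply measurable_prodMk_left hF.measurableSet]
  rfl

theorem lowerSemicontinuous_lintegral_section {h : α × Ω → ℝ} (hh : LowerSemicontinuous h)
    (hnonneg : 0 ≤ h) :
    LowerSemicontinuous fun p : α × ProbabilityMeasure Ω =>
      ∫⁻ ω, ENNReal.ofReal (h (p.1, ω)) ∂p.2 := by
  convert (lowerSemicontinuous_lintegral_ofReal hh hnonneg).comp continuous_diracProba_prod using 2
    with p
  rw [Function.comp_apply, toMeasure_diracProba_prod,
    lintegral_map hh.measurable.ennreal_ofReal measurable_prodMk_left]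

end WeakConvergence

theorem lowerSemicontinuousOn_biInf_of_isCompact {α M β : Type*} [TopologicalSpace α]
    [TopologicalSpace M] [CompleteLinearOrder β] [DenselyOrdered β] {X : Set α}
    (hX : IsCompact X) {g : α → β} (hg : LowerSemicontinuousOn g X) {D : Set (α × M)}
    (hD : IsClosed D) {S : Set M} {C : M → Set α}
    (hC : ∀ μ ∈ S, ∀ x, x ∈ C μ ↔ x ∈ X ∧ (x, μ) ∈ D) :
    LowerSemicontinuousOn (fun μ => ⨅ x ∈ C μ, g x) S := by
  intro μ hμ a ha
  obtain ⟨b, hab, hb⟩ := exists_between ha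
  have hlt : ∀ᶠ μ' in 𝓝 μ, ∀ x ∈ X, (x ∈ X ∧ (x, μ') ∈ D) → b < g x := by
    refine hX.eventually_forall_of_forall_eventually fun x hx => ?_
    by_cases hxD : (x, μ) ∈ D
    · have hbg : b < g x := hb.trans_le (iInf₂_le x ((hC μ hμ x).2 ⟨hx, hxD⟩))
      filter_upwards [continuous_snd.tendsto (μ, x) |>.eventually
        (eventually_nhdsWithin_iff.1 (hg x hx b hbg))] with p hp hpD using hp hpD.1
    · filter_upwards [(continuous_swap.tendsto (μ, x)).eventually (hD.isOpen_compl.mem_nhds hxD)]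
        with p hp hpD using absurd hpD.2 hp
  filter_upwards [nhdsWithin_le_nhds hlt, self_mem_nhdsWithin] with μ' hlt' hμ'
  exact hab.trans_le <| le_iInf₂ fun x hx =>
    have hxX := (hC μ' hμ' x).1 hx
    (hlt' x hxX.1 hxX).le

section DominanceConstraints

variable {n m s : ℕ} {c : Fin n → ℝ} {q d : Fin m → ℝ} {A : Matrix (Fin s) (Fin m) ℝ}
  {T : Matrix (Fin s) (Fin n) ℝ} {X : Set (Fin n → ℝ)} {ν : Measure ℝ}

theorem isClosed_setOf_measure_Iic_le_measure_fE_le (hdom : (domf c q d A T).Nonempty)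
    (hP : Pfeas A T = univ) :
    IsClosed {p : (Fin n → ℝ) × ProbabilityMeasure (Fin s → ℝ) |
      ∀ β : ℝ, ν (Iic β) ≤ (p.2 : Measure (Fin s → ℝ)) {z | fE c q d A T p.1 z ≤ β}} := by
  simp only [ofPred_forall]
  exact isClosed_iInter fun β =>
    (upperSemicontinuous_measure_section (isClosed_setOf_fE_le hdom hP β)).isClosed_preimage _

theorem isClosed_setOf_lintegral_fE_sub_le (hdom : (domf c q d A T).Nonempty)
    (hP : Pfeas A T = univ) :
    IsClosed {p : (Fin n → ℝ) × ProbabilityMeasure (Fin s → ℝ) |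
      ∀ η : ℝ, ∫⁻ z, ENNReal.ofReal (max ((fE c q d A T p.1 z).toReal - η) 0) ∂p.2 ≤
        ∫⁻ b, ENNReal.ofReal (max (b - η) 0) ∂ν} := by
  simp only [ofPred_forall]
  refine isClosed_iInter fun η => ?_
  have hexcess : LowerSemicontinuous fun p : (Fin n → ℝ) × (Fin s → ℝ) =>
      max ((fE c q d A T p.1 p.2).toReal - η) 0 :=
    Continuous.comp_lowerSemicontinuous (g := fun t : ℝ => max (t - η) 0) (by fun_prop)
      (lowerSemicontinuous_toReal_fE hdom hP) fun _ _ h => max_le_max_right 0 (sub_le_sub_right h η)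
  have hlsc := lowerSemicontinuous_lintegral_section hexcess fun _ => le_max_right _ _
  exact hlsc.isClosed_preimage _

theorem mem_c2_iff_lintegral_le (hdom : (domf c q d A T).Nonempty) (hP : Pfeas A T = univ)
    {μ : ProbabilityMeasure (Fin s → ℝ)} (hμ : Integrable id (μ : Measure (Fin s → ℝ)))
    (hν : ∀ η : ℝ, Integrable (fun b => max (b - η) 0) ν) {x : Fin n → ℝ} :
    x ∈ C2 c q d A T X ν μ ↔ x ∈ X ∧ ∀ η : ℝ,
      ∫⁻ z, ENNReal.ofReal (max ((fE c q d A T x z).toReal - η) 0) ∂μ ≤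
        ∫⁻ b, ENNReal.ofReal (max (b - η) 0) ∂ν := by
  refine and_congr_right fun _ => forall_congr' fun η => ?_
  have hint := integrable_max_sub_zero (integrable_toReal_fE hdom hP x hμ) η
  have hnonneg : 0 ≤ ∫ b, max (b - η) 0 ∂ν := integral_nonneg fun _ => le_max_right _ _
  rw [← ofReal_integral_eq_lintegral_ofReal hint (.of_forall fun _ => le_max_right _ _),
    ← ofReal_integral_eq_lintegral_ofReal (hν η) (.of_forall fun _ => le_max_right _ _),
    ENNReal.ofReal_le_ofReal_iff hnonneg]

end DominanceConstraints

theorem optimalValue_lsc_under_dominance_constraints_general {n m s : ℕ}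
    (c : Fin n → ℝ) (q d : Fin m → ℝ)
    (A : Matrix (Fin s) (Fin m) ℝ) (T : Matrix (Fin s) (Fin n) ℝ)
    (hdom : (domf c q d A T).Nonempty) (hP : Pfeas A T = univ)
    (X : Set (Fin n → ℝ)) (hX : IsCompact X)
    (g : (Fin n → ℝ) → EReal) (hg : LowerSemicontinuousOn g X) (ν : Measure ℝ) :
    LowerSemicontinuous (fun μ => ⨅ x ∈ C1 c q d A T X ν μ, g x) ∧
    ((∀ η : ℝ, Integrable (fun b => max (b - η) 0) ν) →
      LowerSemicontinuousOn (fun μ => ⨅ x ∈ C2 c q d A T X ν μ, g x)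
        {μ | ∫⁻ z, ‖z‖₊ ∂(μ : Measure (Fin s → ℝ)) < ⊤}) := by
  constructor
  · rw [← lowerSemicontinuousOn_univ_iff]
    exact lowerSemicontinuousOn_biInf_of_isCompact hX hg
      (isClosed_setOf_measure_Iic_le_measure_fE_le hdom hP) fun _ _ _ => Iff.rfl
  · intro hν
    exact lowerSemicontinuousOn_biInf_of_isCompact hX hg
      (isClosed_setOf_lintegral_fE_sub_le hdom hP) fun μ hμ x =>
        mem_c2_iff_lintegral_le hdom hP ⟨aestronglyMeasurable_id, hμ⟩ hν

theorem optimalValue_lsc_under_dominance_constraints {n m s : ℕ}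
    (c : Fin n → ℝ) (q d : Fin m → ℝ)
    (A : Matrix (Fin s) (Fin m) ℝ) (T : Matrix (Fin s) (Fin n) ℝ)
    (hdom : (domf c q d A T).Nonempty) (hP : Pfeas A T = Set.univ)
    (X : Set (Fin n → ℝ)) (hXne : X.Nonempty) (hXcpt : IsCompact X)
    (g : (Fin n → ℝ) → ℝ) (hg : LowerSemicontinuous g)
    (ν : Measure ℝ) [IsProbabilityMeasure ν]
    (φ₁ φ₂ : ProbabilityMeasure (Fin s → ℝ) → EReal)
    (hφ₁ : ∀ μ, φ₁ μ = ⨅ x ∈ C1 c q d A T X ν μ, ((g x : ℝ) : EReal))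
    (hφ₂ : ∀ μ, φ₂ μ = ⨅ x ∈ C2 c q d A T X ν μ, ((g x : ℝ) : EReal)) :
    -- (a) lower semicontinuity of the first-order optimal value function
    (∀ μ : ProbabilityMeasure (Fin s → ℝ), (C1 c q d A T X ν μ).Nonempty →
      LowerSemicontinuousAt φ₁ μ) ∧
    -- (b) lower semicontinuity of the second-order optimal value function on 𝓜¹_s
    (∫⁻ b, ‖b‖₊ ∂ν < ⊤ →
      ∀ μ ∈ {μ : ProbabilityMeasure (Fin s → ℝ) |
          ∫⁻ z, ‖z‖₊ ∂(μ : Measure (Fin s → ℝ)) < ⊤},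
        (C2 c q d A T X ν μ).Nonempty →
        LowerSemicontinuousWithinAt φ₂
          {μ : ProbabilityMeasure (Fin s → ℝ) |
            ∫⁻ z, ‖z‖₊ ∂(μ : Measure (Fin s → ℝ)) < ⊤} μ) := by
  obtain rfl : φ₁ = _ := funext hφ₁
  obtain rfl : φ₂ = _ := funext hφ₂
  have hgE := continuous_coe_real_ereal.comp_lowerSemicontinuous hg EReal.coe_strictMono.monotone
  obtain ⟨h₁, h₂⟩ := optimalValue_lsc_under_dominance_constraints_general c q d A T hdom hP X
    hXcpt _ (hgE.lowerSemicontinuousOn X) ν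
  exact ⟨fun μ _ => h₁ μ, fun hν μ hμ _ =>
    h₂ (integrable_max_sub_zero ⟨aestronglyMeasurable_id, hν⟩) μ hμ⟩

end
end
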